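/- arXiv:math/0509348 — 2 statements merged into one kernel-verified Lean document; each statement's English description precedes it below -/
import Mathlib

section
/- Let V and W be finite-dimensional complex inner product spaces and let B₁, B₂ ∈ End(V), i ∈ Hom(W,V), j ∈ Hom(V,W) satisfy both ADHM equations [B₁,B₂] + i∘j = 0 and [B₁,B₁†] + [B₂,B₂†] + i∘i† − j†∘j = 0. For each (z₁,z₂) ∈ ℂ², let 𝒟(z₁,z₂) : V ⊕ V ⊕ W → V ⊕ V be the map u ↦ (β(z₁,z₂)u, α(z₁,z₂)†u). Then Ξ := 𝒟∘𝒟† is the block-diagonal endomorphism of V ⊕ V acting as β∘β† on each of the two summands, i.e. 𝒟𝒟†(v₁,v₂) = (ββ†v₁, ββ†v₂); in particular, if β(z₁,z₂) is surjective then Ξ is invertible. -/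
open LinearMap

variable {V W : Type*} [NormedAddCommGroup V] [InnerProductSpace ℂ V] [FiniteDimensional ℂ V]
  [NormedAddCommGroup W] [InnerProductSpace ℂ W] [FiniteDimensional ℂ W]

/-- `V ⊕ V ⊕ W` with its Hilbert (orthogonal direct sum) inner product structure. -/
abbrev adhmTotal (V W : Type*) [NormedAddCommGroup V] [InnerProductSpace ℂ V]
    [NormedAddCommGroup W] [InnerProductSpace ℂ W] : Type _ :=
  WithLp 2 (V × WithLp 2 (V × W))

noncomputable instance : FiniteDimensional ℂ (adhmTotal V W) :=
  Module.Finite.equiv (WithLp.linearEquiv 2 ℂ (V × WithLp 2 (V × W))).symm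

noncomputable instance : FiniteDimensional ℂ (WithLp 2 (V × V)) :=
  Module.Finite.equiv (WithLp.linearEquiv 2 ℂ (V × V)).symm

/-- The ADHM map `α(z₁,z₂) : V → V ⊕ V ⊕ W`, `v ↦ ((B₁+z₁·1)v, (B₂+z₂·1)v, j v)`. -/
noncomputable def adhmAlpha (B₁ B₂ : V →ₗ[ℂ] V) (j : V →ₗ[ℂ] W) (z₁ z₂ : ℂ) :
    V →ₗ[ℂ] adhmTotal V W :=
  (WithLp.linearEquiv 2 ℂ (V × WithLp 2 (V × W))).symm.toLinearMap ∘ₗ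
    ((B₁ + z₁ • LinearMap.id).prod
      ((WithLp.linearEquiv 2 ℂ (V × W)).symm.toLinearMap ∘ₗ
        (B₂ + z₂ • LinearMap.id).prod j))

/-- The ADHM map `β(z₁,z₂) : V ⊕ V ⊕ W → V`, `(v₁,v₂,w) ↦ −(B₂+z₂·1)v₁ + (B₁+z₁·1)v₂ + i w`. -/
noncomputable def adhmBeta (B₁ B₂ : V →ₗ[ℂ] V) (i : W →ₗ[ℂ] V) (z₁ z₂ : ℂ) :
    adhmTotal V W →ₗ[ℂ] V :=
  ((-(B₂ + z₂ • LinearMap.id)) ∘ₗ LinearMap.fst ℂ V (V × W)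
    + (B₁ + z₁ • LinearMap.id) ∘ₗ ((LinearMap.fst ℂ V W) ∘ₗ (LinearMap.snd ℂ V (V × W)))
    + i ∘ₗ ((LinearMap.snd ℂ V W) ∘ₗ (LinearMap.snd ℂ V (V × W)))) ∘ₗ
    ((LinearMap.id : V →ₗ[ℂ] V).prodMap (WithLp.linearEquiv 2 ℂ (V × W)).toLinearMap) ∘ₗ
    (WithLp.linearEquiv 2 ℂ (V × WithLp 2 (V × W))).toLinearMap

/-- The operator `𝒟(z₁,z₂) : V ⊕ V ⊕ W → V ⊕ V`, `u ↦ (β(z₁,z₂)u, α(z₁,z₂)†u)`. -/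
noncomputable def adhmD (B₁ B₂ : V →ₗ[ℂ] V) (i : W →ₗ[ℂ] V) (j : V →ₗ[ℂ] W) (z₁ z₂ : ℂ) :
    adhmTotal V W →ₗ[ℂ] WithLp 2 (V × V) :=
  (WithLp.linearEquiv 2 ℂ (V × V)).symm.toLinearMap ∘ₗ
    (adhmBeta B₁ B₂ i z₁ z₂).prod (adjoint (adhmAlpha B₁ B₂ j z₁ z₂))

theorem adhmAlpha_adjoint_apply (B₁ B₂ : V →ₗ[ℂ] V) (j : V →ₗ[ℂ] W) (z₁ z₂ : ℂ)
    (u : adhmTotal V W) :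
    adjoint (adhmAlpha B₁ B₂ j z₁ z₂) u
      = adjoint B₁ u.fst + (starRingEnd ℂ z₁) • u.fst
        + (adjoint B₂ u.snd.fst + (starRingEnd ℂ z₂) • u.snd.fst) + adjoint j u.snd.snd := by
  refine ext_inner_left ℂ fun v => ?_
  rw [LinearMap.adjoint_inner_right]
  simp [adhmAlpha, WithLp.prod_inner_apply, inner_add_right, inner_add_left, inner_smul_left,
    inner_smul_right, LinearMap.adjoint_inner_right]
  try ring

theorem adhmBeta_adjoint_apply (B₁ B₂ : V →ₗ[ℂ] V) (i : W →ₗ[ℂ] V) (z₁ z₂ : ℂ) (v : V) :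
    adjoint (adhmBeta B₁ B₂ i z₁ z₂) v
      = WithLp.toLp 2 (-(adjoint B₂ v + (starRingEnd ℂ z₂) • v),
          WithLp.toLp 2 (adjoint B₁ v + (starRingEnd ℂ z₁) • v, adjoint i v)) := by
  refine ext_inner_left ℂ fun u => ?_
  rw [LinearMap.adjoint_inner_right]
  simp [adhmBeta, WithLp.prod_inner_apply, inner_add_right, inner_add_left, inner_smul_left,
    inner_smul_right, LinearMap.adjoint_inner_right, inner_neg_left, inner_neg_right]
  try ring

theorem adhmD_adjoint_apply (B₁ B₂ : V →ₗ[ℂ] V) (i : W →ₗ[ℂ] V) (j : V →ₗ[ℂ] W) (z₁ z₂ : ℂ)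
    (p : WithLp 2 (V × V)) :
    adjoint (adhmD B₁ B₂ i j z₁ z₂) p
      = adjoint (adhmBeta B₁ B₂ i z₁ z₂) p.fst + adhmAlpha B₁ B₂ j z₁ z₂ p.snd := by
  refine ext_inner_left ℂ fun u => ?_
  rw [LinearMap.adjoint_inner_right, inner_add_right, LinearMap.adjoint_inner_right,
    ← LinearMap.adjoint_inner_left]
  simp [adhmD, WithLp.prod_inner_apply]

theorem adhm_beta_alpha (B₁ B₂ : V →ₗ[ℂ] V) (i : W →ₗ[ℂ] V) (j : V →ₗ[ℂ] W)
    (h : B₁ ∘ₗ B₂ - B₂ ∘ₗ B₁ + i ∘ₗ j = 0) (z₁ z₂ : ℂ) (v : V) :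
    adhmBeta B₁ B₂ i z₁ z₂ (adhmAlpha B₁ B₂ j z₁ z₂ v) = 0 := by
  have h := LinearMap.congr_fun h v
  simp only [LinearMap.add_apply, LinearMap.sub_apply, LinearMap.comp_apply,
    LinearMap.zero_apply] at h
  rw [← h]
  simp [adhmBeta, adhmAlpha]
  module

theorem adhm_alpha_beta (B₁ B₂ : V →ₗ[ℂ] V) (i : W →ₗ[ℂ] V) (j : V →ₗ[ℂ] W)
    (h : B₁ ∘ₗ B₂ - B₂ ∘ₗ B₁ + i ∘ₗ j = 0) (z₁ z₂ : ℂ) (v : V) :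
    adjoint (adhmAlpha B₁ B₂ j z₁ z₂) (adjoint (adhmBeta B₁ B₂ i z₁ z₂) v) = 0 := by
  refine ext_inner_left ℂ fun u => ?_
  rw [LinearMap.adjoint_inner_right, LinearMap.adjoint_inner_right,
    adhm_beta_alpha B₁ B₂ i j h]
  simp

theorem adhm_alpha_alpha (B₁ B₂ : V →ₗ[ℂ] V) (i : W →ₗ[ℂ] V) (j : V →ₗ[ℂ] W)
    (h : (B₁ ∘ₗ adjoint B₁ - adjoint B₁ ∘ₗ B₁)
        + (B₂ ∘ₗ adjoint B₂ - adjoint B₂ ∘ₗ B₂)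
        + i ∘ₗ adjoint i - adjoint j ∘ₗ j = 0) (z₁ z₂ : ℂ) (v : V) :
    adjoint (adhmAlpha B₁ B₂ j z₁ z₂) (adhmAlpha B₁ B₂ j z₁ z₂ v)
      = adhmBeta B₁ B₂ i z₁ z₂ (adjoint (adhmBeta B₁ B₂ i z₁ z₂) v) := by
  have h := LinearMap.congr_fun h v
  simp only [LinearMap.add_apply, LinearMap.sub_apply, LinearMap.comp_apply,
    LinearMap.zero_apply] at h
  rw [← sub_eq_zero, ← neg_eq_zero, ← h, adhmAlpha_adjoint_apply, adhmBeta_adjoint_apply]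
  simp [adhmBeta, adhmAlpha]
  module

/-- If both ADHM equations hold, then `Ξ = 𝒟𝒟†` is block diagonal, acting as `ββ†` on each of
the two summands of `V ⊕ V`; in particular, if `β(z₁,z₂)` is surjective then `Ξ` is invertible. -/
theorem adhm_D_comp_Dadjoint_diag
    (B₁ B₂ : V →ₗ[ℂ] V) (i : W →ₗ[ℂ] V) (j : V →ₗ[ℂ] W)
    (hADHM1 : B₁ ∘ₗ B₂ - B₂ ∘ₗ B₁ + i ∘ₗ j = 0)
    (hADHM2 : (B₁ ∘ₗ adjoint B₁ - adjoint B₁ ∘ₗ B₁)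
        + (B₂ ∘ₗ adjoint B₂ - adjoint B₂ ∘ₗ B₂)
        + i ∘ₗ adjoint i - adjoint j ∘ₗ j = 0)
    (z₁ z₂ : ℂ) :
    (∀ v₁ v₂ : V,
      (adhmD B₁ B₂ i j z₁ z₂ ∘ₗ adjoint (adhmD B₁ B₂ i j z₁ z₂))
          ((WithLp.equiv 2 (V × V)).symm (v₁, v₂))
        = (WithLp.equiv 2 (V × V)).symm
            ((adhmBeta B₁ B₂ i z₁ z₂ ∘ₗ adjoint (adhmBeta B₁ B₂ i z₁ z₂)) v₁,
             (adhmBeta B₁ B₂ i z₁ z₂ ∘ₗ adjoint (adhmBeta B₁ B₂ i z₁ z₂)) v₂))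
    ∧ (Function.Surjective (adhmBeta B₁ B₂ i z₁ z₂) →
        Function.Bijective (adhmD B₁ B₂ i j z₁ z₂ ∘ₗ adjoint (adhmD B₁ B₂ i j z₁ z₂))) := by
  have key : ∀ v₁ v₂ : V,
      (adhmD B₁ B₂ i j z₁ z₂ ∘ₗ adjoint (adhmD B₁ B₂ i j z₁ z₂))
          ((WithLp.equiv 2 (V × V)).symm (v₁, v₂))
        = (WithLp.equiv 2 (V × V)).symm
            ((adhmBeta B₁ B₂ i z₁ z₂ ∘ₗ adjoint (adhmBeta B₁ B₂ i z₁ z₂)) v₁,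
             (adhmBeta B₁ B₂ i z₁ z₂ ∘ₗ adjoint (adhmBeta B₁ B₂ i z₁ z₂)) v₂) := by
    intro v₁ v₂
    rw [LinearMap.comp_apply, adhmD_adjoint_apply]
    simp [adhmD, adhm_beta_alpha B₁ B₂ i j hADHM1, adhm_alpha_beta B₁ B₂ i j hADHM1,
      adhm_alpha_alpha B₁ B₂ i j hADHM2]
  refine ⟨key, fun hs => ?_⟩
  have hinj : ∀ v, adhmBeta B₁ B₂ i z₁ z₂ (adjoint (adhmBeta B₁ B₂ i z₁ z₂) v) = 0 → v = 0 := by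
    intro v hv
    have h0 : adjoint (adhmBeta B₁ B₂ i z₁ z₂) v = 0 := by
      rw [← inner_self_eq_zero (𝕜 := ℂ), LinearMap.adjoint_inner_left, hv, inner_zero_right]
    obtain ⟨u, hu⟩ := hs v
    rw [← inner_self_eq_zero (𝕜 := ℂ)]
    nth_rewrite 2 [← hu]
    rw [← LinearMap.adjoint_inner_left, h0, inner_zero_left]
  have hI : Function.Injective (adhmD B₁ B₂ i j z₁ z₂ ∘ₗ adjoint (adhmD B₁ B₂ i j z₁ z₂)) := by
    rw [injective_iff_map_eq_zero]
    intro p hp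
    have hk := key p.fst p.snd
    have hpp : (WithLp.equiv 2 (V × V)).symm (p.fst, p.snd) = p := rfl
    rw [hpp, hp] at hk
    have h1 := congrArg (fun q : WithLp 2 (V × V) => q.fst) hk
    have h2 := congrArg (fun q : WithLp 2 (V × V) => q.snd) hk
    have e1 : p.fst = 0 := hinj _ h1.symm
    have e2 : p.snd = 0 := hinj _ h2.symm
    rw [← hpp, e1, e2]
    rfl
  exact ⟨hI, LinearMap.injective_iff_surjective.mp hI⟩
end

section
/- The curvature of the basic instanton is F = (1/(1+|q|²))² · Im(dq ∧ dconj(q)); in components: if A_μ(q) = Im(q · conj(e_μ))/(1 + |q|²), then for all μ, ν and every q ∈ ℍ, F_{μν}(q) = ∂_μA_ν − ∂_νA_μ + [A_μ, A_ν] = (1/(1+|q|²))² · Im(e_μ · conj(e_ν) − e_ν · conj(e_μ)). -/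
/-- The standard quaternion basis `e₁ = 1, e₂ = 𝐢, e₃ = 𝐣, e₄ = 𝐤`, identifying `ℝ⁴ ≅ ℍ`. -/
noncomputable def qe : Fin 4 → Quaternion ℝ
  | 0 => 1
  | 1 => ⟨0, 1, 0, 0⟩
  | 2 => ⟨0, 0, 1, 0⟩
  | 3 => ⟨0, 0, 0, 1⟩

/-- The imaginary part `Im p = (p − conj p)/2` of a quaternion. -/
noncomputable def qIm (p : Quaternion ℝ) : Quaternion ℝ := (p - star p) / 2

/-- The components `A_μ(q) = Im(q · conj(e_μ))/(1 + |q|²)` of the basic instanton on `ℝ⁴ ≅ ℍ`. -/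
noncomputable def basicInstanton (μ : Fin 4) (q : Quaternion ℝ) : Quaternion ℝ :=
  (1 + ‖q‖ ^ 2)⁻¹ • qIm (q * star (qe μ))

/-- The curvature components `F_{μν} = ∂_μA_ν − ∂_νA_μ + [A_μ, A_ν]` of a connection on
`ℝ⁴ ≅ ℍ` with imaginary-quaternion (su(2)) values. -/
noncomputable def qCurv (A : Fin 4 → Quaternion ℝ → Quaternion ℝ) (μ ν : Fin 4)
    (q : Quaternion ℝ) : Quaternion ℝ :=
  fderiv ℝ (A ν) q (qe μ) - fderiv ℝ (A μ) q (qe ν) + (A μ q * A ν q - A ν q * A μ q)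


theorem qIm_smul (p : Quaternion ℝ) : qIm p = (2 : ℝ)⁻¹ • (p - star p) := by
  have h2 : (2 : Quaternion ℝ) = ((2 : ℝ) : Quaternion ℝ) := by norm_cast
  rw [qIm, div_eq_mul_inv, h2, ← Quaternion.coe_inv, Quaternion.mul_coe_eq_smul]

theorem qIm_re (p : Quaternion ℝ) : (qIm p).re = 0 := by
  rw [qIm_smul]; simp

theorem qIm_imI (p : Quaternion ℝ) : (qIm p).imI = p.imI := by
  rw [qIm_smul]; simp; ring

theorem qIm_imJ (p : Quaternion ℝ) : (qIm p).imJ = p.imJ := by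
  rw [qIm_smul]; simp; ring

theorem qIm_imK (p : Quaternion ℝ) : (qIm p).imK = p.imK := by
  rw [qIm_smul]; simp; ring

theorem qnorm_sq (q : Quaternion ℝ) :
    ‖q‖ ^ 2 = q.re ^ 2 + q.imI ^ 2 + q.imJ ^ 2 + q.imK ^ 2 := by
  rw [sq, ← Quaternion.normSq_eq_norm_mul_self, Quaternion.normSq_def']

noncomputable def qImL (e : Quaternion ℝ) : Quaternion ℝ →ₗ[ℝ] Quaternion ℝ where
  toFun q := qIm (q * star e)
  map_add' x y := by
    ext <;> simp [qIm_re, qIm_imI, qIm_imJ, qIm_imK] <;> ring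
  map_smul' c x := by
    ext <;> simp [qIm_re, qIm_imI, qIm_imJ, qIm_imK]

theorem fderiv_basicInstanton (μ : Fin 4) (q v : Quaternion ℝ) :
    fderiv ℝ (basicInstanton μ) q v =
      (1 + ‖q‖ ^ 2)⁻¹ • qIm (v * star (qe μ))
       - (((1 + ‖q‖ ^ 2)⁻¹) ^ 2 * (2 * inner ℝ q v)) • qIm (q * star (qe μ)) := by
  have hN : (1 + ‖q‖ ^ 2) ≠ 0 := by positivity
  have h1 := (((hasFDerivAt_id (𝕜 := ℝ) q).norm_sq).const_add 1)
  have h2 := (hasDerivAt_inv hN).comp_hasFDerivAt q h1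
  have h3 : HasFDerivAt (fun q => qIm (q * star (qe μ)))
      (LinearMap.toContinuousLinearMap (qImL (qe μ))) q :=
    (LinearMap.toContinuousLinearMap (qImL (qe μ))).hasFDerivAt
  have h4 := h2.smul h3
  have h5 : HasFDerivAt (basicInstanton μ) _ q := h4
  rw [h5.fderiv]
  simp [qImL, sub_eq_add_neg]

/-- The curvature of the basic instanton is `F = (1/(1+|q|²))² · Im(dq ∧ dconj q)`; in
components, `F_{μν}(q) = (1/(1+|q|²))² · Im(e_μ·conj(e_ν) − e_ν·conj(e_μ))`. -/
theorem basicInstanton_curvature (μ ν : Fin 4) (q : Quaternion ℝ) :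
    qCurv basicInstanton μ ν q
      = ((1 + ‖q‖ ^ 2)⁻¹) ^ 2 • qIm (qe μ * star (qe ν) - qe ν * star (qe μ)) := by
  have hN : (1 + ‖q‖ ^ 2) ≠ 0 := by positivity
  have hq := qnorm_sq q
  simp only [qCurv, fderiv_basicInstanton, basicInstanton, Quaternion.inner_def]
  generalize hM : (1 + ‖q‖ ^ 2)⁻¹ = M
  have key : M * (1 + (q.re ^ 2 + q.imI ^ 2 + q.imJ ^ 2 + q.imK ^ 2)) = 1 := by
    rw [← hq, ← hM, inv_mul_cancel₀ hN]
  clear hM hq hN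
  have e0 : (qe 0).re = 1 ∧ (qe 0).imI = 0 ∧ (qe 0).imJ = 0 ∧ (qe 0).imK = 0 :=
    ⟨rfl, rfl, rfl, rfl⟩
  have e1 : (qe 1).re = 0 ∧ (qe 1).imI = 1 ∧ (qe 1).imJ = 0 ∧ (qe 1).imK = 0 :=
    ⟨rfl, rfl, rfl, rfl⟩
  have e2 : (qe 2).re = 0 ∧ (qe 2).imI = 0 ∧ (qe 2).imJ = 1 ∧ (qe 2).imK = 0 :=
    ⟨rfl, rfl, rfl, rfl⟩
  have e3 : (qe 3).re = 0 ∧ (qe 3).imI = 0 ∧ (qe 3).imJ = 0 ∧ (qe 3).imK = 1 :=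
    ⟨rfl, rfl, rfl, rfl⟩
  fin_cases μ <;> fin_cases ν <;> ext <;>
    simp [e0, e1, e2, e3, qIm_re, qIm_imI, qIm_imJ, qIm_imK, -sub_self] <;>
    first
      | ring1
      | linear_combination (2 * M) * key
      | linear_combination (-2 * M) * key
end
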